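/- Let p be a positive integer and E an interval of ℝ. If a function f : E → ℝ is δ-quasi-Cauchy continuous on E (i.e., f maps δ-quasi-Cauchy sequences of points in E to δ-quasi-Cauchy sequences), then f is p-quasi-Cauchy continuous on E. -/

import Mathlib

open Filter Topology

/-- A real sequence `x` is `p`-quasi-Cauchy if `x (n + p) - x n → 0`. -/
def PQuasiCauchy (p : ℕ) (x : ℕ → ℝ) : Prop :=
  Tendsto (fun n => x (n + p) - x n) atTop (𝓝 0)

/-- A function `f` is `p`-quasi-Cauchy continuous on `E` if it maps `p`-quasi-Cauchy
sequences of points in `E` to `p`-quasi-Cauchy sequences. -/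
def PQuasiCauchyContinuousOn (p : ℕ) (f : ℝ → ℝ) (E : Set ℝ) : Prop :=
  ∀ x : ℕ → ℝ, (∀ n, x n ∈ E) → PQuasiCauchy p x → PQuasiCauchy p (fun n => f (x n))

/-- A real sequence `x` is `δ`-quasi-Cauchy if `x (n + 2) - 2 x (n + 1) + x n → 0`. -/
def DeltaQuasiCauchy (x : ℕ → ℝ) : Prop :=
  Tendsto (fun n => x (n + 2) - 2 * x (n + 1) + x n) atTop (𝓝 0)

/-- A function `f` is `δ`-quasi-Cauchy continuous on `E` if it maps `δ`-quasi-Cauchy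
sequences of points in `E` to `δ`-quasi-Cauchy sequences. -/
def DeltaQuasiCauchyContinuousOn (f : ℝ → ℝ) (E : Set ℝ) : Prop :=
  ∀ x : ℕ → ℝ, (∀ n, x n ∈ E) → DeltaQuasiCauchy x →
    DeltaQuasiCauchy (fun n => f (x n))

/-!
Any two points of an interval `E` are joined inside `E` by a finite chain of arbitrarily small
steps, so every sequence in `E` is a subsequence of a quasi-Cauchy sequence in `E`. Given `u`, `v`
in `E` with `u n - v n → 0`, one can therefore find a quasi-Cauchy sequence in `E` whose consecutive
terms are infinitely often `u n, v n, u n`. A quasi-Cauchy sequence is `δ`-quasi-Cauchy, so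
`f (u n) - 2 f (v n) + f (u n) = 2 (f (u n) - f (v n))` tends to `0`. Hence `f` is uniformly
continuous on `E`, and uniformly continuous functions preserve `p`-quasi-Cauchy sequences.
-/

open Relation Set Uniformity

section Chains

variable {α : Type*} {r : α → α → Prop}

-- Asking for the last relation at every `i ≥ l`, not only at `i = l`, lets chains be concatenated
-- without tracking that the current index stays at most `l`.
theorem exists_chain_of_transGen {a b : α} (h : TransGen r a b) :
    ∃ (l : ℕ) (c : ℕ → α), c 0 = a ∧ (∀ i < l, r (c i) (c (i + 1))) ∧ ∀ i ≥ l, r (c i) b := by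
  induction h using TransGen.head_induction_on with
  | @single a hab => exact ⟨0, fun _ => a, rfl, by simp, fun _ _ => hab⟩
  | @head a a' haa' _ ih =>
    obtain ⟨l, c, rfl, hstep, hlast⟩ := ih
    refine ⟨l + 1, fun | 0 => a | i + 1 => c i, rfl, fun i hi => ?_, fun i hi => ?_⟩
    · cases i with
      | zero => exact haa'
      | succ i => exact hstep i (by lia)
    · cases i with
      | zero => lia
      | succ i => exact hlast i (by lia)

theorem exists_chain_range_subset_of_transGen {s : ℕ → α}
    (h : ∀ n, TransGen r (s n) (s (n + 1))) :
    ∃ z : ℕ → α, (∀ k, r (z k) (z (k + 1))) ∧ range s ⊆ range z := by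
  choose l c hfirst hstep hlast using fun n => exists_chain_of_transGen (h n)
  -- The position `(n, i)` stands for the `i`-th vertex of the chain from `s n` to `s (n + 1)`.
  let next (q : ℕ × ℕ) : ℕ × ℕ := if q.2 < l q.1 then (q.1, q.2 + 1) else (q.1 + 1, 0)
  let pos (k : ℕ) : ℕ × ℕ := next^[k] (0, 0)
  have pos_succ (k : ℕ) : pos (k + 1) = next (pos k) := Function.iterate_succ_apply' next k _
  have rel_next (q : ℕ × ℕ) : r (c q.1 q.2) (c (next q).1 (next q).2) := by
    by_cases hq : q.2 < l q.1
    · simpa only [next, if_pos hq] using hstep _ _ hq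
    · simpa only [next, if_neg hq, hfirst] using hlast _ _ (not_lt.1 hq)
  have pos_add {n k : ℕ} (hk : pos k = (n, 0)) : ∀ i ≤ l n, pos (k + i) = (n, i) := by
    intro i hi
    induction i with
    | zero => exact hk
    | succ i ih =>
      have hil : i < l n := by lia
      simp only [← add_assoc, pos_succ, ih hil.le, next, if_pos hil]
  have exists_pos_eq (n : ℕ) : ∃ k, pos k = (n, 0) := by
    induction n with
    | zero => exact ⟨0, rfl⟩
    | succ n ih =>
      obtain ⟨k, hk⟩ := ih
      exact ⟨k + l n + 1, by simp only [pos_succ, pos_add hk _ le_rfl, next, lt_irrefl, if_false]⟩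
  refine ⟨fun k => c (pos k).1 (pos k).2, fun k => ?_, range_subset_iff.2 fun n => ?_⟩
  · simpa only [pos_succ] using rel_next (pos k)
  · obtain ⟨k, hk⟩ := exists_pos_eq n
    exact ⟨k, by simp only [hk, hfirst]⟩

end Chains

/-- A sequence in a uniform space is quasi-Cauchy if its consecutive terms become arbitrarily close.
In `ℝ` this is `PQuasiCauchy 1`. -/
def QuasiCauchySeq {X : Type*} [UniformSpace X] (x : ℕ → X) : Prop :=
  Tendsto (fun n => (x n, x (n + 1))) atTop (𝓤 X)

section UniformSpace

variable {X : Type*} [UniformSpace X]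

theorem reflTransGen_mem_uniformity [PreconnectedSpace X] {V : Set (X × X)} (hV : V ∈ 𝓤 X)
    (a b : X) : ReflTransGen (fun x y => (x, y) ∈ V) a b :=
  PreconnectedSpace.induction₂' _
    (fun x => by
      filter_upwards [mem_nhds_left x hV, mem_nhds_right x hV] with y hxy hyx
      exact ⟨.single hxy, .single hyx⟩)
    inferInstance a b

theorem exists_quasiCauchySeq_comp_eq [PreconnectedSpace X] [(𝓤 X).IsCountablyGenerated]
    (u : ℕ → X) :
    ∃ (z : ℕ → X) (φ : ℕ → ℕ), QuasiCauchySeq z ∧ StrictMono φ ∧ z ∘ φ = u := by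
  obtain ⟨V, hV⟩ := (𝓤 X).exists_antitone_basis
  -- A state `(n, a)` is a point `a` together with the precision `V n` required of the next move.
  let move (s t : ℕ × X) : Prop := s.1 ≤ t.1 ∧ (s.2, t.2) ∈ V s.1
  have hmove (n : ℕ) : TransGen move (n, u n) (n + 1, u (n + 1)) :=
    .tail' ((reflTransGen_mem_uniformity (hV.mem n) (u n) (u (n + 1))).lift (n, ·)
      fun _ _ h => ⟨le_rfl, h⟩) ⟨n.le_succ, refl_mem_uniformity (hV.mem n)⟩
  obtain ⟨s, hs, hrange⟩ := exists_chain_range_subset_of_transGen hmove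
  choose φ hφ using range_subset_iff.1 hrange
  have stage_mono : Monotone fun k => (s k).1 := monotone_nat_of_le_succ fun k => (hs k).1
  refine ⟨fun k => (s k).2, φ, hV.tendsto_right_iff.2 fun N _ => ?_,
    fun m n hmn => stage_mono.reflect_lt (by simpa only [hφ] using hmn),
    funext fun n => congrArg Prod.snd (hφ n)⟩
  filter_upwards [eventually_ge_atTop (φ N)] with k hk
  have hN : N ≤ (s k).1 := by simpa only [hφ] using stage_mono hk
  exact hV.antitone hN (hs k).2

namespace QuasiCauchySeq

variable {x : ℕ → X}

theorem comp_of_succ_eq_or (hx : QuasiCauchySeq x) {g : ℕ → ℕ} (hg : Tendsto g atTop atTop)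
    (hsucc : ∀ n, g (n + 1) = g n ∨ g (n + 1) = g n + 1) : QuasiCauchySeq (x ∘ g) := by
  refine tendsto_def.2 fun V hV => ?_
  filter_upwards [tendsto_def.1 (hx.comp hg) V hV] with n hn
  obtain h | h := hsucc n
  · simpa only [mem_preimage, Function.comp_apply, h] using refl_mem_uniformity hV
  · simpa only [mem_preimage, Function.comp_apply, h] using hn

theorem comp_uniformContinuous {Y : Type*} [UniformSpace Y] {f : X → Y} (hx : QuasiCauchySeq x)
    (hf : UniformContinuous f) : QuasiCauchySeq (f ∘ x) :=
  Tendsto.comp hf hx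

theorem congr_uniformity {y : ℕ → X} (hx : QuasiCauchySeq x)
    (hxy : Tendsto (fun n => (x n, y n)) atTop (𝓤 X)) : QuasiCauchySeq y :=
  (hxy.uniformity_symm.uniformity_trans hx).uniformity_trans (hxy.comp (tendsto_add_atTop_nat 1))

theorem extend {φ : ℕ → ℕ} {v : ℕ → X} (hx : QuasiCauchySeq x) (hφ : StrictMono φ)
    (hv : Tendsto (fun n => (x (φ n), v n)) atTop (𝓤 X)) :
    QuasiCauchySeq (Function.extend φ v x) := by
  refine hx.congr_uniformity (tendsto_def.2 fun V hV => ?_)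
  obtain ⟨N, hN⟩ := eventually_atTop.1 (hv hV)
  filter_upwards [eventually_ge_atTop (φ N)] with k hk
  rw [mem_preimage]
  by_cases hkφ : ∃ n, φ n = k
  · obtain ⟨n, rfl⟩ := hkφ
    simpa only [hφ.injective.extend_apply] using hN n (hφ.le_iff_le.1 hk)
  · simpa only [Function.extend_apply' _ _ _ hkφ] using refl_mem_uniformity hV

end QuasiCauchySeq

theorem exists_quasiCauchySeq_consecutive [PreconnectedSpace X] [(𝓤 X).IsCountablyGenerated]
    {u v : ℕ → X} (huv : Tendsto (fun n => (u n, v n)) atTop (𝓤 X)) :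
    ∃ (w : ℕ → X) (ψ : ℕ → ℕ), QuasiCauchySeq w ∧ StrictMono ψ ∧
      ∀ n, w (ψ n) = u n ∧ w (ψ n + 1) = v n ∧ w (ψ n + 2) = u n := by
  obtain ⟨z, φ, hz, hφ, rfl⟩ := exists_quasiCauchySeq_comp_eq u
  -- Repeat every term of `z` three times and replace the middle copy of `u n` by `v n`.
  have hz₃ : QuasiCauchySeq (z ∘ (· / 3)) :=
    hz.comp_of_succ_eq_or (Nat.tendsto_div_const_atTop three_ne_zero) fun n => by lia
  have hψ : StrictMono fun n => 3 * φ n := hφ.const_mul three_pos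
  have hmid : StrictMono fun n => 3 * φ n + 1 := hψ.add_const 1
  refine ⟨Function.extend (fun n => 3 * φ n + 1) v (z ∘ (· / 3)), fun n => 3 * φ n,
    hz₃.extend hmid (huv.congr fun n => ?_), hψ,
    fun n => ⟨?_, hmid.injective.extend_apply _ _ n, ?_⟩⟩
  · simp only [Function.comp_apply, show (3 * φ n + 1) / 3 = φ n by lia]
  · rw [Function.extend_apply' _ _ _ (by lia)]
    simp only [Function.comp_apply, show 3 * φ n / 3 = φ n by lia]
  · rw [Function.extend_apply' _ _ _ (by lia)]
    simp only [Function.comp_apply, show (3 * φ n + 2) / 3 = φ n by lia]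

end UniformSpace

theorem pQuasiCauchy_iff_tendsto_uniformity {p : ℕ} {x : ℕ → ℝ} :
    PQuasiCauchy p x ↔ Tendsto (fun n => (x (n + p), x n)) atTop (𝓤 ℝ) := by
  simp only [PQuasiCauchy, tendsto_uniformity_iff_dist_tendsto_zero, Real.dist_eq,
    tendsto_zero_iff_abs_tendsto_zero, Function.comp_def, abs_abs]

theorem QuasiCauchySeq.pQuasiCauchy_one {x : ℕ → ℝ} (hx : QuasiCauchySeq x) : PQuasiCauchy 1 x :=
  pQuasiCauchy_iff_tendsto_uniformity.2 (Tendsto.uniformity_symm hx)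

theorem PQuasiCauchy.deltaQuasiCauchy {x : ℕ → ℝ} (hx : PQuasiCauchy 1 x) : DeltaQuasiCauchy x := by
  have h := (hx.comp (tendsto_add_atTop_nat 1)).sub hx
  rw [sub_zero] at h
  refine h.congr fun n => ?_
  simp only [Function.comp_apply]
  ring

theorem DeltaQuasiCauchyContinuousOn.uniformContinuousOn {f : ℝ → ℝ} {E : Set ℝ}
    (hf : DeltaQuasiCauchyContinuousOn f E) (hE : IsPreconnected E) : UniformContinuousOn f E := by
  have : PreconnectedSpace E := isPreconnected_iff_preconnectedSpace.1 hE
  rw [uniformContinuousOn_iff_restrict]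
  refine tendsto_of_seq_tendsto fun q hq => ?_
  obtain ⟨w, ψ, hw, hψ, hvisit⟩ := exists_quasiCauchySeq_consecutive hq
  have hwR : QuasiCauchySeq fun n => (w n : ℝ) :=
    hw.comp_uniformContinuous uniformContinuous_subtype_val
  have hsecond : Tendsto (fun n => f (q n).1 - 2 * f (q n).2 + f (q n).1) atTop (𝓝 0) := by
    refine ((hf _ (fun n => (w n).2) hwR.pQuasiCauchy_one.deltaQuasiCauchy).comp
      hψ.tendsto_atTop).congr fun n => ?_
    simp only [Function.comp_apply, hvisit]
  have hdiff : Tendsto (fun n => f (q n).1 - f (q n).2) atTop (𝓝 0) := by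
    have h := hsecond.div_const 2
    rw [zero_div] at h
    exact h.congr fun n => by ring
  exact tendsto_uniformity_iff_dist_tendsto_zero.2 (tendsto_zero_iff_norm_tendsto_zero.1 hdiff)

theorem pQuasiCauchyContinuousOn_of_uniformContinuousOn {f : ℝ → ℝ} {E : Set ℝ}
    (hf : UniformContinuousOn f E) (p : ℕ) : PQuasiCauchyContinuousOn p f E := by
  intro x hxE hx
  rw [pQuasiCauchy_iff_tendsto_uniformity] at hx ⊢
  have hxEE : ∀ n, (x (n + p), x n) ∈ E ×ˢ E := fun n => ⟨hxE (n + p), hxE n⟩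
  exact Tendsto.comp hf (tendsto_inf.2 ⟨hx, tendsto_principal.2 (.of_forall hxEE)⟩)

/-- If `f` is `δ`-quasi-Cauchy continuous on an interval (nonempty
convex subset) `E` of `ℝ`, then `f` is `p`-quasi-Cauchy continuous on `E` for any
positive integer `p`. -/
theorem deltaQuasiCauchyContinuous_implies_pQuasiCauchyContinuous
    (p : ℕ) (hp : 0 < p) (E : Set ℝ) (hne : E.Nonempty) (hconv : Convex ℝ E)
    (f : ℝ → ℝ) (hf : DeltaQuasiCauchyContinuousOn f E) :
    PQuasiCauchyContinuousOn p f E :=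
  pQuasiCauchyContinuousOn_of_uniformContinuousOn (hf.uniformContinuousOn hconv.isPreconnected) p
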